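/- Define F-submodules F(r,d) of SH⁺ for r ≥ 1 and d ∈ ℤ as follows: F(1,d) is the F-span of {D¹_k : 0 ≤ k ≤ d} (so F(1,d) = 0 for d < 0); and for r ≥ 2, F(r,d) is the submodule generated by all products a·b with a ∈ F(r',d'), b ∈ F(r'',d''), r' + r'' = r, r', r'' ≥ 1, d' + d'' = d, together with all commutators [D¹_l, y] with 0 ≤ l ≤ d+1 and y ∈ F(r−1, d−l+1). Then for all r₁, r₂ ≥ 1 and all d₁, d₂ ∈ ℤ, and all a ∈ F(r₁,d₁), b ∈ F(r₂,d₂), the commutator [a,b] = ab − ba lies in F(r₁+r₂, d₁+d₂−1). -/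

import Mathlib

noncomputable section

/-- The base field `F = ℂ(κ)`, rational functions over `ℂ`. -/
abbrev F : Type := RatFunc ℂ

/-- The formal parameter `κ ∈ F`. -/
noncomputable def κ : F := RatFunc.X

/-- Commutator `[a,b] = a*b - b*a` in an associative ring. -/
def br {A : Type*} [Ring A] (a b : A) : A := a * b - b * a

/-- Generators of `SH⁺` : `D0 n` stands for `D⁰_{n+1}` (`l = n+1 ≥ 1`),
`D1 k` stands for `D¹_k` (`k ≥ 0`). -/
inductive Gen : Type
  | D0 : ℕ → Gen
  | D1 : ℕ → Gen

/-- `D⁰_{n+1}` as an element of the free algebra. -/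
noncomputable def g0 (n : ℕ) : FreeAlgebra F Gen := FreeAlgebra.ι F (Gen.D0 n)

/-- `D¹_k` as an element of the free algebra. -/
noncomputable def g1 (k : ℕ) : FreeAlgebra F Gen := FreeAlgebra.ι F (Gen.D1 k)

/-- Defining relations of `SH⁺`.  Recall `g0 n = D⁰_{n+1}`, so
`mix l k` says `[D⁰_{l+1}, D¹_k] = D¹_{(l+1)+k-1}`. -/
inductive SHRel : FreeAlgebra F Gen → FreeAlgebra F Gen → Prop
  | comm0 (l k : ℕ) : SHRel (br (g0 l) (g0 k)) 0
  | mix (l k : ℕ) : SHRel (br (g0 l) (g1 k)) (g1 (l + k))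
  | quad : SHRel (3 * br (g1 2) (g1 1) - br (g1 3) (g1 0) + br (g1 1) (g1 0)
      + (κ * (κ - 1)) • (g1 0 * g1 0 + br (g1 1) (g1 0))) 0
  | cubic : SHRel (br (g1 0) (br (g1 0) (g1 1))) 0

/-- The algebra `SH⁺`, presented by generators and relations. -/
abbrev SHp : Type := RingQuot SHRel

/-- `D⁰_l ∈ SH⁺` (meaningful for `l ≥ 1`). -/
noncomputable def D0 (l : ℕ) : SHp := RingQuot.mkAlgHom F SHRel (g0 (l - 1))

/-- `D¹_k ∈ SH⁺`. -/
noncomputable def D1 (k : ℕ) : SHp := RingQuot.mkAlgHom F SHRel (g1 k)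

/-- Auxiliary, fuel-based construction of the filtration submodules `F(r,d)`.
The first argument is fuel; `FiltAux fuel r d` is the correct value of `F(r,d)`
whenever `r ≤ fuel + 1` (the recursion at rank `r` only ever refers to strictly
smaller ranks). -/
noncomputable def FiltAux : ℕ → ℕ → ℤ → Submodule F SHp
  | _, 0, _ => ⊥
  | _, 1, d => Submodule.span F {x | ∃ k : ℕ, (k : ℤ) ≤ d ∧ x = D1 k}
  | 0, _ + 2, _ => ⊥
  | fuel + 1, n + 2, d =>
      Submodule.span F
        ({x | ∃ r' r'' : ℕ, ∃ d' d'' : ℤ, 1 ≤ r' ∧ 1 ≤ r'' ∧ r' + r'' = n + 2 ∧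
            d' + d'' = d ∧ ∃ a ∈ FiltAux fuel r' d', ∃ b ∈ FiltAux fuel r'' d'', x = a * b} ∪
         {x | ∃ l : ℕ, (l : ℤ) ≤ d + 1 ∧ ∃ y ∈ FiltAux fuel (n + 1) (d - l + 1),
            x = br (D1 l) y})

/-- The submodules `F(r,d) ⊆ SH⁺` (`r ≥ 1`, `d ∈ ℤ`):
`F(1,d)` is the span of the `D¹_k` with `0 ≤ k ≤ d`, and for `r ≥ 2`, `F(r,d)` is
generated by the products `a·b`, `a ∈ F(r',d')`, `b ∈ F(r'',d'')`, `r'+r''=r`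
(`r',r'' ≥ 1`), `d'+d''=d`, together with the commutators `[D¹_l, y]`,
`0 ≤ l ≤ d+1`, `y ∈ F(r-1, d-l+1)`. -/
noncomputable def Filt (r : ℕ) (d : ℤ) : Submodule F SHp := FiltAux r r d

/-- Abstract setting: an algebra with elements `e k`, derivations `δ l` and the filtration. -/
structure SHSys (K A : Type*) [Field K] [Ring A] [Algebra K A] where
  e : ℕ → A
  δ : ℕ → A →ₗ[K] A
  Fi : ℕ → ℤ → Submodule K A
  c : K
  δ_mul : ∀ l a b, δ l (a * b) = δ l a * b + a * δ l b
  δ_e : ∀ l k, δ l (e k) = e (k + l)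
  quad : 3 * ⁅e 2, e 1⁆ - ⁅e 3, e 0⁆ + ⁅e 1, e 0⁆ + c • (e 0 * e 0 + ⁅e 1, e 0⁆) = 0
  cubic : ⁅e 0, ⁅e 0, e 1⁆⁆ = 0
  Fi_one : ∀ d, Fi 1 d = Submodule.span K {x | ∃ k : ℕ, (k : ℤ) ≤ d ∧ x = e k}
  Fi_two : ∀ n d, Fi (n + 2) d = Submodule.span K
        ({x | ∃ r' r'' : ℕ, ∃ d' d'' : ℤ, 1 ≤ r' ∧ 1 ≤ r'' ∧ r' + r'' = n + 2 ∧
            d' + d'' = d ∧ ∃ a ∈ Fi r' d', ∃ b ∈ Fi r'' d'', x = a * b} ∪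
         {x | ∃ l : ℕ, (l : ℤ) ≤ d + 1 ∧ ∃ y ∈ Fi (n + 1) (d - l + 1), x = ⁅e l, y⁆})

namespace SHSys

variable {K A : Type*} [Field K] [Ring A] [Algebra K A] (S : SHSys K A)

theorem δ_lie (l : ℕ) (a b : A) : S.δ l ⁅a, b⁆ = ⁅S.δ l a, b⁆ + ⁅a, S.δ l b⁆ := by
  simp only [Ring.lie_def, map_sub, S.δ_mul]; abel

theorem e_mem {k : ℕ} {d : ℤ} (h : (k : ℤ) ≤ d) : S.e k ∈ S.Fi 1 d := by
  rw [S.Fi_one]; exact Submodule.subset_span ⟨k, h, rfl⟩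

theorem mul_mem {r s : ℕ} {d d' : ℤ} (hr : 1 ≤ r) (hs : 1 ≤ s) {a b : A}
    (ha : a ∈ S.Fi r d) (hb : b ∈ S.Fi s d') : a * b ∈ S.Fi (r + s) (d + d') := by
  obtain ⟨n, hn⟩ : ∃ n, r + s = n + 2 := ⟨r + s - 2, by omega⟩
  rw [hn, S.Fi_two]
  exact Submodule.subset_span (Or.inl ⟨r, s, d, d', hr, hs, hn, rfl, a, ha, b, hb, rfl⟩)

theorem lie_mem0 {r l : ℕ} {d : ℤ} (hr : 1 ≤ r) (hd : 0 ≤ d) {y : A}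
    (hy : y ∈ S.Fi r d) : ⁅S.e l, y⁆ ∈ S.Fi (r + 1) (d + l - 1) := by
  obtain ⟨n, rfl⟩ : ∃ n, r = n + 1 := ⟨r - 1, by omega⟩
  rw [S.Fi_two]
  refine Submodule.subset_span (Or.inr ⟨l, by omega, y, ?_, rfl⟩)
  convert hy using 2
  ring

theorem mono : ∀ {r : ℕ} {d d' : ℤ}, 1 ≤ r → d ≤ d' → S.Fi r d ≤ S.Fi r d' := by
  intro r
  induction r using Nat.strong_induction_on with
  | _ r ih =>
  intro d d' hr h
  match r, hr with
  | 1, _ =>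
    rw [S.Fi_one, S.Fi_one]
    apply Submodule.span_mono
    rintro x ⟨k, hk, rfl⟩
    exact ⟨k, hk.trans h, rfl⟩
  | n + 2, _ =>
    rw [S.Fi_two, S.Fi_two]
    apply Submodule.span_mono
    rintro x (⟨r', r'', a', a'', h1, h2, h3, h4, a, ha, b, hb, rfl⟩ | ⟨l, hl, y, hy, rfl⟩)
    · refine Or.inl ⟨r', r'', a', a'' + (d' - d), h1, h2, h3, by omega, a, ha, b, ?_, rfl⟩
      exact ih r'' (by omega) h2 (by omega) hb
    · refine Or.inr ⟨l, by omega, y, ?_, rfl⟩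
      exact ih (n + 1) (by omega) (by omega) (by omega) hy

/-- Induction principle for the filtration. -/
theorem Fi_le {n : ℕ} {d : ℤ} {M : Submodule K A}
    (h1 : ∀ r' r'' : ℕ, ∀ d' d'' : ℤ, 1 ≤ r' → 1 ≤ r'' → r' + r'' = n + 2 → d' + d'' = d →
      ∀ a ∈ S.Fi r' d', ∀ b ∈ S.Fi r'' d'', a * b ∈ M)
    (h2 : ∀ l : ℕ, (l : ℤ) ≤ d + 1 → ∀ y ∈ S.Fi (n + 1) (d - l + 1), ⁅S.e l, y⁆ ∈ M) :
    S.Fi (n + 2) d ≤ M := by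
  rw [S.Fi_two, Submodule.span_le]
  rintro x (⟨r', r'', a', a'', k1, k2, k3, k4, a, ha, b, hb, rfl⟩ | ⟨l, hl, y, hy, rfl⟩)
  · exact h1 _ _ _ _ k1 k2 k3 k4 _ ha _ hb
  · exact h2 l hl y hy

theorem Fi_one_le {d : ℤ} {M : Submodule K A}
    (h1 : ∀ k : ℕ, (k : ℤ) ≤ d → S.e k ∈ M) : S.Fi 1 d ≤ M := by
  rw [S.Fi_one, Submodule.span_le]
  rintro x ⟨k, hk, rfl⟩
  exact h1 k hk

theorem δ_mem (l : ℕ) : ∀ {r : ℕ} {d : ℤ} {x : A}, 1 ≤ r → x ∈ S.Fi r d →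
    S.δ l x ∈ S.Fi r (d + l) := by
  intro r
  induction r using Nat.strong_induction_on with
  | _ r ih =>
  intro d x hr hx
  suffices h : S.Fi r d ≤ (S.Fi r (d + l)).comap (S.δ l) from h hx
  match r, hr with
  | 1, _ =>
    apply S.Fi_one_le
    intro k hk
    rw [Submodule.mem_comap, S.δ_e]
    exact S.e_mem (by push_cast; omega)
  | n + 2, _ =>
    apply S.Fi_le
    · intro r' r'' d' d'' h1 h2 h3 h4 a ha b hb
      rw [Submodule.mem_comap, S.δ_mul, ← h3]
      apply Submodule.add_mem
      · have := S.mul_mem h1 h2 (ih r' (by omega) h1 ha) hb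
        rwa [show d' + l + d'' = d + l by omega] at this
      · have := S.mul_mem h1 h2 ha (ih r'' (by omega) h2 hb)
        rwa [show d' + (d'' + l) = d + l by omega] at this
    · intro k hk y hy
      rw [Submodule.mem_comap, S.δ_lie, S.δ_e, S.Fi_two]
      apply Submodule.add_mem
      · refine Submodule.subset_span (Or.inr ⟨k + l, by push_cast; omega, y, ?_, rfl⟩)
        convert hy using 2
        push_cast; ring
      · refine Submodule.subset_span (Or.inr ⟨k, by omega, _, ?_, rfl⟩)
        convert ih (n + 1) (by omega) (by omega) hy using 2
        ring

/-- Vanishing in negative degree up to rank `r`. -/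
def Neg (r : ℕ) : Prop := ∀ s, 1 ≤ s → s ≤ r → ∀ d : ℤ, d < 0 → S.Fi s d = ⊥

variable {S}

theorem lie_e_mem {r : ℕ} (N : S.Neg r) {t l : ℕ} {d : ℤ} (h1 : 1 ≤ t) (h2 : t ≤ r) {y : A}
    (hy : y ∈ S.Fi t d) : ⁅S.e l, y⁆ ∈ S.Fi (t + 1) (d + l - 1) := by
  rcases lt_or_ge d 0 with hd | hd
  · rw [N t h1 h2 d hd, Submodule.mem_bot] at hy
    rw [hy, Ring.lie_def]
    simp
  · exact S.lie_mem0 h1 hd hy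

theorem lie_mem {r : ℕ} (N : S.Neg r) : ∀ {s t : ℕ} {d d' : ℤ}, 1 ≤ s → 1 ≤ t → s + t ≤ r + 1 →
    ∀ {a b : A}, a ∈ S.Fi s d → b ∈ S.Fi t d' → ⁅a, b⁆ ∈ S.Fi (s + t) (d + d' - 1) := by
  intro s
  induction s using Nat.strong_induction_on with
  | _ s ih =>
  intro t d d' hs ht hst a b ha hb
  suffices h : S.Fi s d ≤ (S.Fi (s + t) (d + d' - 1)).comap
      ((LinearMap.mulRight K b) - LinearMap.mulLeft K b) by
    simpa [Ring.lie_def] using h ha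
  match s, hs with
  | 1, _ =>
    apply S.Fi_one_le
    intro k hk
    have := lie_e_mem N (l := k) ht (by omega) hb
    have := S.mono (by omega) (show d' + k - 1 ≤ d + d' - 1 by omega) this
    rw [add_comm t 1] at this
    simpa [Ring.lie_def] using this
  | n + 2, _ =>
    apply S.Fi_le
    · intro r' r'' d1 d2 h1 h2 h3 h4 x hx y hy
      have e1 := ih r'' (by omega) h2 ht (by omega) hy hb
      have e2 := ih r' (by omega) h1 ht (by omega) hx hb
      have e3 := S.mul_mem h1 (by omega) hx e1
      have e4 := S.mul_mem (by omega) h2 e2 hy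
      rw [show r' + (r'' + t) = n + 2 + t by omega,
        show d1 + (d2 + d' - 1) = d + d' - 1 by omega] at e3
      rw [show r' + t + r'' = n + 2 + t by omega,
        show d1 + d' - 1 + d2 = d + d' - 1 by omega] at e4
      rw [Submodule.mem_comap]
      convert Submodule.add_mem _ e3 e4 using 1
      simp only [LinearMap.sub_apply, LinearMap.mulRight_apply, LinearMap.mulLeft_apply,
        Ring.lie_def]
      noncomm_ring
    · intro l hl y hy
      have e1 := ih (n + 1) (by omega) (by omega) ht (by omega) hy hb
      have e2 := lie_e_mem N (l := l) (by omega) (by omega) e1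
      have e3 := lie_e_mem N (l := l) ht (by omega) hb
      have e4 := ih (n + 1) (by omega) (by omega) (by omega) (by omega) hy e3
      rw [show n + 1 + t + 1 = n + 2 + t by omega,
        show d - l + 1 + d' - 1 + l - 1 = d + d' - 1 by omega] at e2
      rw [show n + 1 + (t + 1) = n + 2 + t by omega,
        show d - l + 1 + (d' + l - 1) - 1 = d + d' - 1 by omega] at e4
      rw [Submodule.mem_comap]
      convert Submodule.sub_mem _ e2 e4 using 1
      simp only [LinearMap.sub_apply, LinearMap.mulRight_apply, LinearMap.mulLeft_apply,
        Ring.lie_def]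
      noncomm_ring

variable (S)

/-- Span of products. -/
def Pr (r : ℕ) (d : ℤ) : Submodule K A := Submodule.span K
  {x | ∃ r' r'' : ℕ, ∃ d' d'' : ℤ, 1 ≤ r' ∧ 1 ≤ r'' ∧ r' + r'' = r ∧
            d' + d'' = d ∧ ∃ a ∈ S.Fi r' d', ∃ b ∈ S.Fi r'' d'', x = a * b}

/-- Lower degree terms plus products. -/
def P (r : ℕ) (d : ℤ) : Submodule K A := S.Fi r (d - 1) ⊔ S.Pr r d

variable {S}

theorem low_mem_P {r : ℕ} {d d' : ℤ} (hr : 1 ≤ r) (h : d' < d) {x : A} (hx : x ∈ S.Fi r d') :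
    x ∈ S.P r d :=
  Submodule.mem_sup_left (S.mono hr (by omega) hx)

theorem mul_mem_P {r s t : ℕ} {d d' d'' : ℤ} (hr : 1 ≤ r) (hs : 1 ≤ s) {a b : A}
    (ha : a ∈ S.Fi r d) (hb : b ∈ S.Fi s d') (ht : r + s = t) (hd : d + d' = d'') :
    a * b ∈ S.P t d'' :=
  Submodule.mem_sup_right (Submodule.subset_span ⟨r, s, d, d', hr, hs, ht, hd, a, ha, b, hb, rfl⟩)

theorem P_le_of {r : ℕ} {d : ℤ} {M : Submodule K A} (h1 : ∀ x ∈ S.Fi r (d - 1), x ∈ M)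
    (h2 : ∀ r' r'' : ℕ, ∀ d' d'' : ℤ, 1 ≤ r' → 1 ≤ r'' → r' + r'' = r → d' + d'' = d →
      ∀ a ∈ S.Fi r' d', ∀ b ∈ S.Fi r'' d'', a * b ∈ M) : S.P r d ≤ M := by
  refine sup_le h1 (Submodule.span_le.2 ?_)
  rintro x ⟨r', r'', a', a'', k1, k2, k3, k4, a, ha, b, hb, rfl⟩
  exact h2 _ _ _ _ k1 k2 k3 k4 _ ha _ hb

theorem P_le {r : ℕ} {d : ℤ} (hr : 1 ≤ r) : S.P r d ≤ S.Fi r d := by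
  apply P_le_of
  · intro x hx
    exact S.mono hr (by omega) hx
  · intro r' r'' d' d'' h1 h2 h3 h4 a ha b hb
    rw [← h3, ← h4]
    exact S.mul_mem h1 h2 ha hb

theorem δ_mem_P (l : ℕ) {r : ℕ} {d : ℤ} (hr : 1 ≤ r) {x : A} (hx : x ∈ S.P r d) :
    S.δ l x ∈ S.P r (d + l) := by
  suffices h : S.P r d ≤ (S.P r (d + l)).comap (S.δ l) from h hx
  apply P_le_of
  · intro x hx
    exact low_mem_P hr (by omega) (S.δ_mem l hr hx)
  · intro r' r'' d' d'' h1 h2 h3 h4 a ha b hb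
    rw [Submodule.mem_comap, S.δ_mul]
    apply Submodule.add_mem
    · exact mul_mem_P h1 h2 (S.δ_mem l h1 ha) hb h3 (by omega)
    · exact mul_mem_P h1 h2 ha (S.δ_mem l h2 hb) h3 (by omega)

theorem lie_mem_P {r : ℕ} (N : S.Neg r) {s t q : ℕ} {d d' d'' : ℤ} (hs : 1 ≤ s) (ht : 1 ≤ t)
    (hst : s + t ≤ r + 1) {a b : A} (ha : a ∈ S.Fi s d) (hb : b ∈ S.P t d')
    (hq : s + t = q) (hd : d + d' - 1 = d'') : ⁅a, b⁆ ∈ S.P q d'' := by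
  subst hq hd
  suffices h : S.P t d' ≤ (S.P (s + t) (d + d' - 1)).comap
      ((LinearMap.mulLeft K a) - LinearMap.mulRight K a) by
    simpa [Ring.lie_def] using h hb
  apply P_le_of
  · intro x hx
    have := lie_mem N hs ht hst ha hx
    have := low_mem_P (d := d + d' - 1) (by omega) (by omega) this
    simpa [Ring.lie_def] using this
  · intro r' r'' d1 d2 h1 h2 h3 h4 x hx y hy
    have e1 := lie_mem N hs h1 (by omega) ha hx
    have e2 := lie_mem N hs h2 (by omega) ha hy
    rw [Submodule.mem_comap]
    have e3 := mul_mem_P (t := s + t) (d'' := d + d' - 1) (by omega) h2 e1 hy (by omega) (by omega)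
    have e4 := mul_mem_P (t := s + t) (d'' := d + d' - 1) h1 (by omega) hx e2 (by omega) (by omega)
    convert Submodule.add_mem _ e3 e4 using 1
    simp only [LinearMap.sub_apply, LinearMap.mulRight_apply, LinearMap.mulLeft_apply,
        Ring.lie_def]
    noncomm_ring

theorem P_neg {r : ℕ} (N : S.Neg r) (hr : 1 ≤ r) {d : ℤ} (hd : d < 0) : S.P (r + 1) d = ⊥ := by
  have key : ∀ d : ℤ, d < 0 → ∀ r' r'' : ℕ, ∀ d' d'' : ℤ, 1 ≤ r' → 1 ≤ r'' → r' + r'' = r + 1 →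
      d' + d'' = d → ∀ a ∈ S.Fi r' d', ∀ b ∈ S.Fi r'' d'', a * b = 0 := by
    intro d hd r' r'' d' d'' h1 h2 h3 h4 a ha b hb
    rcases lt_or_ge d' 0 with h | h
    · rw [N r' h1 (by omega) d' h, Submodule.mem_bot] at ha
      simp [ha]
    · rw [N r'' h2 (by omega) d'' (by omega), Submodule.mem_bot] at hb
      simp [hb]
  rw [eq_bot_iff]
  apply P_le_of
  · obtain ⟨n, rfl⟩ : ∃ n, r = n + 1 := ⟨r - 1, by omega⟩
    apply S.Fi_le
    · intro r' r'' d' d'' h1 h2 h3 h4 a ha b hb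
      exact key _ (by omega) r' r'' d' d'' h1 h2 h3 h4 a ha b hb
    · intro l hl
      omega
  · intro r' r'' d' d'' h1 h2 h3 h4 a ha b hb
    exact key _ hd r' r'' d' d'' h1 h2 h3 h4 a ha b hb

section alg

variable {V : Type*} [AddCommGroup V] [Module K V] [CharZero K]

theorem alg1 (x : ℕ → V) (s m : ℕ)
    (B : ∀ a b, a + b = m + 1 →
      (s : K) • x a + (s : K) • x b + x (m + 1) + ((s : K) * s) • x 0 = 0) (hs : 1 ≤ s)
    (C : ∀ j k, 1 ≤ j → 1 ≤ k → j + k = m + 2 →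
      (j : K) • (x k - x 0) = (k : K) • (x j - x 0)) :
    ∀ k, k ≤ m + 1 → ((m : K) + 1) • x k = (((m : K) + 1) - k * (s + 1)) • x 0 := by
  have hs0 : (s : K) ≠ 0 := by exact_mod_cast (by omega : s ≠ 0)
  have hs1 : (s : K) + 1 ≠ 0 := by exact_mod_cast (by omega : s + 1 ≠ 0)
  have A1 : x (m + 1) = -((s : K) • x 0) := by
    have h := B 0 (m + 1) (by omega)
    apply smul_right_injective V hs1
    simp only
    linear_combination (norm := module) h
  have B' : ∀ a b, a + b = m + 1 → x a + x b = (1 - (s : K)) • x 0 := by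
    intro a b hab
    have h := B a b hab
    rw [A1] at h
    apply smul_right_injective V hs0
    simp only
    linear_combination (norm := module) h
  intro k
  induction k with
  | zero => intro _; simp
  | succ k ih =>
    intro hk
    have ih := ih (by omega)
    obtain ⟨j, hj⟩ : ∃ j, j + k = m + 1 := ⟨m + 1 - k, by omega⟩
    have hc := C j (k + 1) (by omega) (by omega) (by omega)
    have hb := B' j k hj
    have hj0 : (j : K) ≠ 0 := by exact_mod_cast (by omega : j ≠ 0)
    have hm : (m : K) = j + k - 1 := by
      have : ((j + k : ℕ) : K) = ((m + 1 : ℕ) : K) := by rw [hj]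
      push_cast at this
      linear_combination -this
    rw [hm] at ih ⊢
    push_cast at hc ⊢
    apply smul_right_injective V hj0
    simp only
    linear_combination (norm := module) ((j : K) + k) • hc + (((k : K) + 1) * (j + k)) • hb
      - ((k : K) + 1) • ih

theorem alg2 (X : ℕ → V) (n : ℕ)
    (B : ∀ a b, a + b = n → X a + X b = 0)
    (C : ∀ j, j + 3 ≤ n → X (j + 3) - (3 : K) • X (j + 2) + (3 : K) • X (j + 1) - X j = 0) :
    ∀ a, a ≤ n → (n : K) • X a = ((n : K) - 2 * a) • X 0 := by
  have Q : ∀ a, a ≤ n → (2 : K) • X a = (2 : K) • X 0 + (2 * (a : K)) • (X 1 - X 0)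
      + ((a : K) * (a - 1)) • (X 2 - (2 : K) • X 1 + X 0) := by
    intro a
    induction a using Nat.strong_induction_on with
    | _ a ih =>
    match a with
    | 0 => intro _; push_cast; module
    | 1 => intro _; push_cast; module
    | 2 => intro _; push_cast; module
    | a + 3 =>
      intro h
      have h0 := ih a (by omega) (by omega)
      have h1 := ih (a + 1) (by omega) (by omega)
      have h2 := ih (a + 2) (by omega) (by omega)
      have hc := C a h
      push_cast at *
      linear_combination (norm := module) h0 - (3 : K) • h1 + (3 : K) • h2 + (2 : K) • hc
  intro a ha
  match n with
  | 0 =>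
    obtain rfl : a = 0 := by omega
    simp
  | 1 =>
    have := B 1 0 rfl
    obtain rfl | rfl : a = 0 ∨ a = 1 := by omega
    · simp
    · push_cast; linear_combination (norm := module) this
  | n + 2 =>
    have q1 := Q (n + 2) le_rfl
    have q2 := Q (n + 1) (by omega)
    have b1 := B (n + 2) 0 rfl
    have b2 := B (n + 1) 1 rfl
    have qa := Q a ha
    have hn : (n : K) + 1 ≠ 0 := by exact_mod_cast (by omega : n + 1 ≠ 0)
    have hE : X 2 - (2 : K) • X 1 + X 0 = 0 := by
      apply smul_right_injective V (mul_ne_zero (two_ne_zero (α := K)) hn)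
      simp only [smul_zero]
      push_cast at q1 q2
      linear_combination (norm := module) q2 - q1 + (2 : K) • b1 - (2 : K) • b2
    rw [hE] at q1 qa
    apply smul_right_injective V (two_ne_zero (α := K))
    push_cast at *
    linear_combination (norm := module) ((n : K) + 2) • qa - (a : K) • q1 + (2 * (a : K)) • b1

end alg

section lieb

theorem leib (x a b : A) : x * (a * b) - a * b * x = (x * a - a * x) * b + a * (x * b - b * x) := by
  noncomm_ring
theorem bl_add (a b c : A) : ⁅a, b + c⁆ = ⁅a, b⁆ + ⁅a, c⁆ := by
  simp only [Ring.lie_def]; noncomm_ring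
theorem bl_sub (a b c : A) : ⁅a, b - c⁆ = ⁅a, b⁆ - ⁅a, c⁆ := by
  simp only [Ring.lie_def]; noncomm_ring
theorem bl_smul (k : K) (a b : A) : ⁅a, k • b⁆ = k • ⁅a, b⁆ := by
  simp [Ring.lie_def, smul_sub]
theorem br_smul (k : K) (a b : A) : ⁅k • a, b⁆ = k • ⁅a, b⁆ := by
  simp [Ring.lie_def, smul_sub]
theorem bl_zero (a : A) : ⁅a, (0 : A)⁆ = 0 := by simp [Ring.lie_def]
theorem br_skew (a b : A) : ⁅a, b⁆ = -⁅b, a⁆ := by simp [Ring.lie_def]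
theorem br_jac (a b c : A) : ⁅a, ⁅b, c⁆⁆ = ⁅⁅a, b⁆, c⁆ + ⁅b, ⁅a, c⁆⁆ := by
  simp only [Ring.lie_def]; noncomm_ring

end lieb

variable (S)

/-- The basic elements `U r d`, with symbol `z ^ r ξ ^ d`. -/
def U : ℕ → ℕ → A
  | 0, _ => 0
  | 1, d => S.e d
  | n + 2, d => ((d : K) + 1)⁻¹ • ⁅U (n + 1) (d + 1), S.e 0⁆

variable {S}

theorem U_one (d : ℕ) : S.U 1 d = S.e d := by rw [U]

theorem U_mem : ∀ {r : ℕ} (_ : 1 ≤ r) {d : ℕ}, S.U r d ∈ S.Fi r d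
  | 1, _, d => by rw [U_one]; exact S.e_mem le_rfl
  | n + 2, _, d => by
    rw [U]
    apply Submodule.smul_mem
    rw [br_skew]
    apply Submodule.neg_mem
    have := S.lie_mem0 (l := 0) (by omega) (by omega) (U_mem (r := n + 1) (by omega) (d := d + 1))
    convert this using 2
    push_cast; ring

variable [CharZero K]

theorem lie_U {r : ℕ} (hr : 1 ≤ r) (d : ℕ) :
    ⁅S.e 0, S.U r (d + 1)⁆ = -(((d : K) + 1) • S.U (r + 1) d) := by
  obtain ⟨n, rfl⟩ : ∃ n, r = n + 1 := ⟨r - 1, by omega⟩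
  have hd : (d : K) + 1 ≠ 0 := by exact_mod_cast (by omega : d + 1 ≠ 0)
  rw [U, smul_inv_smul₀ hd, br_skew]

variable (S)

structure Hyp (r : ℕ) : Prop where
  N : S.Neg r
  gen : ∀ s, 1 ≤ s → s ≤ r → ∀ d : ℕ, S.Fi s d ≤ Submodule.span K {S.U s d} ⊔ S.P s d
  brk : ∀ s, 1 ≤ s → s < r → ∀ k d m : ℕ, k + d = m + 1 →
    ⁅S.e k, S.U s d⁆ - ((k * s : K) - d) • S.U (s + 1) m ∈ S.P (s + 1) m
  der : ∀ s, 1 ≤ s → s ≤ r → ∀ l d : ℕ,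
    S.δ l (S.U s d) - (s : K) • S.U s (d + l) ∈ S.P s ((d + l : ℕ) : ℤ)

variable {S}

set_option linter.unusedSectionVars false

theorem hyp_one : S.Hyp 1 where
  N := by
    intro s h1 h2 d hd
    obtain rfl : s = 1 := by omega
    rw [eq_bot_iff]
    apply S.Fi_one_le
    intro k hk
    omega
  gen := by
    intro s h1 h2 d
    obtain rfl : s = 1 := by omega
    apply S.Fi_one_le
    intro k hk
    rcases eq_or_lt_of_le hk with h | h
    · have : k = d := by omega
      rw [this, ← U_one]
      exact Submodule.mem_sup_left (Submodule.mem_span_singleton_self _)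
    · exact Submodule.mem_sup_right (low_mem_P le_rfl h (S.e_mem le_rfl))
  brk := by intro s h1 h2; omega
  der := by
    intro s h1 h2 l d
    obtain rfl : s = 1 := by omega
    rw [U_one, U_one, S.δ_e]
    simp

theorem lie_congr {r : ℕ} (N : S.Neg r) {s t q : ℕ} {d d' d'' : ℤ} (hs : 1 ≤ s) (ht : 1 ≤ t)
    (hst : s + t ≤ r + 1) {a b b' : A} (ha : a ∈ S.Fi s d) (hb : b - b' ∈ S.P t d')
    (hq : s + t = q) (hd : d + d' - 1 = d'') : ⁅a, b⁆ - ⁅a, b'⁆ ∈ S.P q d'' := by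
  rw [← bl_sub]
  exact lie_mem_P N hs ht hst ha hb hq hd

/-- Commutativity of row zero. -/
theorem lie_row0 {r : ℕ} (N : S.Neg r) {i j : ℕ} (hi : 1 ≤ i) (hj : 1 ≤ j) (h : i + j ≤ r) :
    ⁅S.U i 0, S.U j 0⁆ = 0 := by
  have := lie_mem N hi hj (by omega) (U_mem (S := S) hi (d := 0)) (U_mem (S := S) hj (d := 0))
  rw [N (i + j) (by omega) h _ (by simp)] at this
  simpa using this

theorem eq_bracket {r : ℕ} (N : S.Neg r) (hr : 1 ≤ r) {s t : ℕ} (hs : 1 ≤ s) (ht : 1 ≤ t)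
    (hst : s + t = r + 1) {a b b' : A} (ha : a ∈ S.Fi s 0) (hb : b - b' ∈ S.P t 0) :
    ⁅a, b⁆ = ⁅a, b'⁆ := by
  have := lie_congr N hs ht hst.le ha hb hst (d'' := -1) (by simp)
  rw [P_neg N hr (by omega), Submodule.mem_bot] at this
  exact sub_eq_zero.1 this

theorem step_e1 {r : ℕ} (H : S.Hyp r) {i j : ℕ} (hi : 1 ≤ i) (hj : 1 ≤ j) (h : i + j = r) :
    (i : K) • ⁅S.U (i + 1) 0, S.U j 0⁆ + (j : K) • ⁅S.U i 0, S.U (j + 1) 0⁆ = 0 := by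
  have h0 := lie_row0 H.N hi hj h.le
  have h1 : ⁅S.e 1, ⁅S.U i 0, S.U j 0⁆⁆ = 0 := by rw [h0, bl_zero]
  rw [br_jac, br_skew ⁅S.e 1, S.U i 0⁆] at h1
  have a1 := H.brk i hi (by omega) 1 0 0 rfl
  have a2 := H.brk j hj (by omega) 1 0 0 rfl
  rw [eq_bracket H.N (by omega) hj (by omega) (by omega) (U_mem (S := S) hj (d := 0)) a1,
    eq_bracket H.N (by omega) hi (by omega) (by omega) (U_mem (S := S) hi (d := 0)) a2,
    bl_smul, bl_smul, br_skew (S.U j 0)] at h1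
  push_cast at h1
  linear_combination (norm := module) h1

theorem step_f {r : ℕ} (H : S.Hyp r) {i : ℕ} (hi : 1 ≤ i) (h : i + 2 ≤ r) :
    ⁅⁅S.e 0, S.e 2⁆, S.U i 0⁆ - (-(2 * i : K)) • S.U (i + 2) 0 ∈ S.P (i + 2) 0 := by
  have h0 : ⁅S.e 0, S.U i 0⁆ = 0 := by
    have := lie_row0 H.N (i := 1) le_rfl hi (by omega)
    rwa [U_one] at this
  have h1 := br_jac (S.e 0) (S.e 2) (S.U i 0)
  rw [h0, bl_zero, add_zero] at h1
  rw [← h1]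
  have a1 := H.brk i hi (by omega) 2 0 1 rfl
  have a2 := lie_congr H.N (s := 1) (q := i + 2) (d'' := 0) le_rfl (by omega) (by omega)
    (S.e_mem (k := 0) (d := 0) (by simp)) a1 (by omega) (by simp)
  rw [bl_smul, lie_U (by omega) 0] at a2
  convert a2 using 1
  push_cast
  module

theorem row0 {r : ℕ} (hr : 1 ≤ r) (H : S.Hyp r) : ⁅S.e 0, S.U r 0⁆ = 0 := by
  obtain rfl | rfl | h3 : r = 1 ∨ r = 2 ∨ 3 ≤ r := by omega
  · rw [U_one, Ring.lie_def, sub_self]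
  · rw [U, bl_smul, U_one, br_skew (S.e (0 + 1)), ← neg_one_smul K, bl_smul, zero_add, S.cubic]
    simp
  · obtain ⟨t, rfl⟩ : ∃ t, r = t + 3 := ⟨r - 3, by omega⟩
    have k1 := step_e1 H (i := 1) (j := t + 2) (by omega) (by omega) (by omega)
    have k2 := step_e1 H (i := 2) (j := t + 1) (by omega) (by omega) (by omega)
    have h0 := lie_row0 H.N (i := 1) (j := t + 1) le_rfl (by omega) (by omega)
    have h1 : ⁅⁅S.e 0, S.e 2⁆, ⁅S.U 1 0, S.U (t + 1) 0⁆⁆ = 0 := by rw [h0, bl_zero]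
    rw [br_jac, br_skew ⁅⁅S.e 0, S.e 2⁆, S.U 1 0⁆] at h1
    have a1 := step_f H (i := 1) le_rfl (by omega)
    have a2 := step_f H (i := t + 1) (by omega) (by omega)
    rw [eq_bracket H.N (by omega) (by omega) (by omega) (by omega)
        (U_mem (S := S) (r := t + 1) (by omega) (d := 0)) a1,
      eq_bracket H.N (by omega) (by omega) (by omega) (by omega)
        (U_mem (S := S) (r := 1) (by omega) (d := 0)) a2,
      bl_smul, bl_smul, br_skew (S.U (t + 1) 0)] at h1
    rw [← U_one]
    have hc : ((t : K) + 1) * (t + 4) ≠ 0 := by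
      exact_mod_cast (by positivity : (t + 1) * (t + 4) ≠ 0)
    apply smul_right_injective A hc
    simp only [smul_zero]
    simp only [Nat.reduceAdd, show t + 2 + 1 = t + 3 from rfl, 
      show t + 1 + 1 = t + 2 from rfl] at h1 k1 k2 ⊢
    push_cast at h1 k1 k2
    linear_combination (norm := module) -h1 + ((t : K) + 1) • k1 - k2

theorem neg_succ {r : ℕ} (hr : 1 ≤ r) (H : S.Hyp r) : S.Neg (r + 1) := by
  intro s h1 h2 d hd
  rcases Nat.lt_or_ge r s with h | h
  · obtain rfl : s = r + 1 := by omega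
    have hP := P_neg H.N hr hd
    rw [eq_bot_iff]
    obtain ⟨n, rfl⟩ : ∃ n, r = n + 1 := ⟨r - 1, by omega⟩
    apply S.Fi_le
    · intro r' r'' d' d'' h1 h2 h3 h4 a ha b hb
      rw [← hP]
      exact mul_mem_P h1 h2 ha hb h3 h4
    · intro l hl y hy
      obtain rfl : l = 0 := by omega
      obtain rfl : d = -1 := by omega
      rw [← hP]
      have hy' : y ∈ S.Fi (n + 1) ((0 : ℕ) : ℤ) := by simpa using hy
      have := H.gen (n + 1) hr le_rfl 0 hy'
      obtain ⟨u, hu, p, hp, rfl⟩ := Submodule.mem_sup.1 this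
      obtain ⟨c, rfl⟩ := Submodule.mem_span_singleton.1 hu
      rw [bl_add, bl_smul, row0 hr H, smul_zero, zero_add]
      exact lie_mem_P H.N (s := 1) le_rfl hr (by omega)
        (S.e_mem (k := 0) (d := 0) (by simp)) hp (by omega) (by simp)
  · exact H.N s h1 h d hd

/-- The third difference expression. -/
def T (S : SHSys K A) (j k : ℕ) : A :=
  ⁅S.e (j + 3), S.e k⁆ - (3 : K) • ⁅S.e (j + 2), S.e (k + 1)⁆
    + (3 : K) • ⁅S.e (j + 1), S.e (k + 2)⁆ - ⁅S.e j, S.e (k + 3)⁆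

theorem T_symm (j k : ℕ) : S.T j k = S.T k j := by
  unfold T
  rw [br_skew (S.e (k + 3)), br_skew (S.e (k + 2)), br_skew (S.e (k + 1)), br_skew (S.e k)]
  module

theorem δ_T (l j k : ℕ) : S.δ l (S.T j k) = S.T (j + l) k + S.T j (k + l) := by
  unfold T
  simp only [map_sub, map_add, map_smul, S.δ_lie, S.δ_e]
  simp only [Nat.add_right_comm _ _ l]
  module

theorem T_zero : S.T 0 0 ∈ S.Fi 2 0 := by
  have e0 : S.e 0 ∈ S.Fi 1 0 := S.e_mem (by simp)
  have e1 : S.e 0 * S.e 0 ∈ S.Fi 2 0 := S.mul_mem le_rfl le_rfl e0 e0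
  have e2 : ⁅S.e 1, S.e 0⁆ ∈ S.Fi 2 0 := by
    simpa using S.lie_mem0 (l := 1) le_rfl le_rfl e0
  have hq := S.quad
  have h3 : (3 : A) * ⁅S.e 2, S.e 1⁆ = (3 : K) • ⁅S.e 2, S.e 1⁆ := by
    rw [Algebra.smul_def, map_ofNat]
  rw [h3] at hq
  have : S.T 0 0 = (2 : K) • (⁅S.e 1, S.e 0⁆ + S.c • (S.e 0 * S.e 0 + ⁅S.e 1, S.e 0⁆)) := by
    unfold T
    simp only [zero_add]
    rw [br_skew (S.e 1) (S.e 2), br_skew (S.e 0) (S.e 3)]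
    linear_combination (norm := module) (-2 : K) • hq
  rw [this]
  exact Submodule.smul_mem _ _ (Submodule.add_mem _ e2
    (Submodule.smul_mem _ _ (Submodule.add_mem _ e1 e2)))

theorem T_mem (a b : ℕ) : S.T a b ∈ S.Fi 2 ((a + b : ℕ) : ℤ) := by
  have h0 := T_zero (S := S)
  have h1 := S.δ_mem (a + b) (by omega) h0
  have h2 := S.δ_mem b (by omega) (S.δ_mem a (by omega) h0)
  rw [δ_T] at h1 h2
  rw [map_add, δ_T, δ_T] at h2
  simp only [zero_add] at h1 h2
  rw [T_symm b a] at h2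
  have h3 := Submodule.smul_mem _ ((2 : K)⁻¹) (Submodule.sub_mem _ h2 (by push_cast at h1; exact h1))
  push_cast
  convert h3 using 1
  rw [eq_inv_smul_iff₀ two_ne_zero]
  module

theorem brk_one (k d m : ℕ) (h : k + d = m + 1) :
    ⁅S.e k, S.U 1 d⁆ - ((k * (1 : ℕ) : K) - d) • S.U (1 + 1) m ∈ S.P (1 + 1) m := by
  have key := alg2 (K := K) (fun a => (S.P 2 (m : ℤ)).mkQ ⁅S.e a, S.e (m + 1 - a)⁆) (m + 1) ?_ ?_
    k (by omega)
  · have hm : (m : K) + 1 ≠ 0 := by exact_mod_cast (by omega : m + 1 ≠ 0)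
    have hd : (d : K) = m + 1 - k := by
      have : ((k + d : ℕ) : K) = ((m + 1 : ℕ) : K) := by rw [h]
      push_cast at this
      linear_combination this
    have hz := lie_U (S := S) (r := 1) le_rfl m
    simp only [U_one] at hz ⊢
    simp only [show m + 1 - k = d by omega, Nat.sub_zero, hz, ← map_smul] at key
    rw [← sub_eq_zero, ← map_sub, Submodule.mkQ_apply, Submodule.Quotient.mk_eq_zero] at key
    have := Submodule.smul_mem _ ((m : K) + 1)⁻¹ key
    convert this using 1
    rw [eq_inv_smul_iff₀ hm, hd]
    push_cast
    module
  · intro a b hab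
    simp only [show m + 1 - a = b by omega, show m + 1 - b = a by omega]
    rw [br_skew (S.e a), map_neg, neg_add_cancel]
  · intro j hj
    obtain ⟨t, ht⟩ : ∃ t, j + t + 3 = m + 1 := ⟨m + 1 - 3 - j, by omega⟩
    simp only [show m + 1 - (j + 3) = t by omega, show m + 1 - (j + 2) = t + 1 by omega,
      show m + 1 - (j + 1) = t + 2 by omega, show m + 1 - j = t + 3 by omega, ← map_smul,
      ← map_sub, ← map_add]
    rw [Submodule.mkQ_apply, Submodule.Quotient.mk_eq_zero]
    exact low_mem_P (by omega) (by push_cast; omega) (T_mem (S := S) j t)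

theorem brk_two {r : ℕ} (hr : 2 ≤ r) (H : S.Hyp r) (k d m : ℕ) (h : k + d = m + 1) :
    ⁅S.e k, S.U r d⁆ - ((k * r : K) - d) • S.U (r + 1) m ∈ S.P (r + 1) m := by
  have e0 : ∀ k : ℕ, S.e k ∈ S.Fi 1 k := fun k => S.e_mem le_rfl
  have key := alg1 (K := K) (fun a => (S.P (r + 1) (m : ℤ)).mkQ ⁅S.e a, S.U r (m + 1 - a)⁆) r m
    ?_ (by omega) ?_ k (by omega)
  · have hm : (m : K) + 1 ≠ 0 := by exact_mod_cast (by omega : m + 1 ≠ 0)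
    have hd : (d : K) = m + 1 - k := by
      have : ((k + d : ℕ) : K) = ((m + 1 : ℕ) : K) := by rw [h]
      push_cast at this
      linear_combination this
    have hz := lie_U (S := S) (r := r) (by omega) m
    simp only [show m + 1 - k = d by omega, Nat.sub_zero, hz, ← map_smul] at key
    rw [← sub_eq_zero, ← map_sub, Submodule.mkQ_apply, Submodule.Quotient.mk_eq_zero] at key
    have := Submodule.smul_mem _ ((m : K) + 1)⁻¹ key
    convert this using 1
    rw [eq_inv_smul_iff₀ hm, hd]
    module
  · intro a b hab
    simp only [show m + 1 - a = b by omega, show m + 1 - b = a by omega, Nat.sub_self,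
      Nat.sub_zero, ← map_smul, ← map_add]
    rw [Submodule.mkQ_apply, Submodule.Quotient.mk_eq_zero]
    have z := row0 (by omega) H
    have z1 := congrArg (fun x => S.δ b (S.δ a x)) z
    simp only [S.δ_lie, S.δ_e, map_add, map_zero, zero_add] at z1
    rw [hab] at z1
    have d1 := H.der r (by omega) le_rfl a 0
    have d2 := H.der r (by omega) le_rfl b 0
    have d3 := δ_mem_P b (by omega) d1
    have d4 := H.der r (by omega) le_rfl b (0 + a)
    rw [map_sub, map_smul] at d3
    have d5 := Submodule.add_mem _ d3 (Submodule.smul_mem _ (r : K)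
      (by push_cast at d4 ⊢; exact d4))
    have l1 := lie_congr H.N (q := r + 1) (d'' := m) le_rfl (by omega) (by omega) (e0 b) d1
      (by omega) (by push_cast; omega)
    have l2 := lie_congr H.N (q := r + 1) (d'' := m) le_rfl (by omega) (by omega) (e0 a) d2
      (by omega) (by push_cast; omega)
    have l3 := lie_mem_P H.N (q := r + 1) (d'' := m) le_rfl (by omega) (by omega) (e0 0) d5
      (by omega) (by push_cast; omega)
    simp only [zero_add, hab, bl_smul, bl_add, bl_sub] at l1 l2 l3
    have := Submodule.neg_mem _ (Submodule.add_mem _ (Submodule.add_mem _ l1 l2) l3)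
    convert this using 1
    linear_combination (norm := module) z1
  · intro j k hj hk hjk
    obtain ⟨t, rfl⟩ : ∃ t, r = t + 1 + 1 := ⟨r - 2, by omega⟩
    have ht : (t : K) + 1 ≠ 0 := by exact_mod_cast (by omega : t + 1 ≠ 0)
    have hm : (m : K) + 2 ≠ 0 := by exact_mod_cast (by omega : m + 2 ≠ 0)
    obtain ⟨j, rfl⟩ : ∃ j', j = j' + 1 := ⟨j - 1, by omega⟩
    obtain ⟨k, rfl⟩ : ∃ k', k = k' + 1 := ⟨k - 1, by omega⟩
    simp only [show m + 1 - (j + 1) = k by omega, show m + 1 - (k + 1) = j by omega,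
      Nat.sub_zero, ← map_smul, ← map_sub]
    rw [← sub_eq_zero, ← map_sub, Submodule.mkQ_apply, Submodule.Quotient.mk_eq_zero]
    have v0 : ⁅S.e 0, S.U (t + 1) 0⁆ = 0 := by
      have := lie_row0 H.N (i := 1) (j := t + 1) le_rfl (by omega) (by omega)
      rwa [U_one] at this
    have b1 := H.brk (t + 1) (by omega) (by omega) (j + 1) 0 j rfl
    have b2 := H.brk (t + 1) (by omega) (by omega) (k + 1) 0 k rfl
    have b3 := H.brk (t + 1) (by omega) (by omega) (m + 2) 0 (m + 1) rfl
    have b4 := H.brk 1 (by omega) (by omega) (k + 1) (j + 1) (m + 1) (by omega)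
    have l1 := lie_congr H.N (q := t + 1 + 1 + 1) (d'' := m) le_rfl (by omega) (by omega)
      (e0 (k + 1)) b1 (by omega) (by push_cast; omega)
    have l2 := lie_congr H.N (q := t + 1 + 1 + 1) (d'' := m) le_rfl (by omega) (by omega)
      (e0 (j + 1)) b2 (by omega) (by push_cast; omega)
    have l3 := lie_congr H.N (q := t + 1 + 1 + 1) (d'' := m) le_rfl (by omega) (by omega)
      (e0 0) b3 (by omega) (by push_cast; omega)
    have l4 := lie_congr H.N (q := t + 1 + 1 + 1) (d'' := m) (by omega) (by omega) (by omega)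
      (U_mem (S := S) (r := t + 1) (d := 0) (by omega)) b4 (by omega) (by push_cast; omega)
    have j1 := br_jac (S.e (k + 1)) (S.e (j + 1)) (S.U (t + 1) 0)
    have j2 := br_jac (S.e 0) (S.e (m + 2)) (S.U (t + 1) 0)
    rw [v0, bl_zero, add_zero, br_skew ⁅S.e 0, S.e (m + 2)⁆] at j2
    rw [br_skew ⁅S.e (k + 1), S.e (j + 1)⁆] at j1
    have hz := lie_U (S := S) (r := 1) le_rfl (m + 1)
    simp only [U_one] at hz l4
    rw [hz, ← neg_smul, bl_smul] at j2
    simp only [bl_smul] at l1 l2 l3 l4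
    have hmk : (m : K) = k + j := by
      exact_mod_cast (by omega : m = k + j)
    have := Submodule.smul_mem _ (((t : K) + 1) * ((m : K) + 2))⁻¹ (Submodule.sub_mem _
      (Submodule.smul_mem _ ((m : K) + 2) (Submodule.sub_mem _ (Submodule.sub_mem _ l2 l1) l4))
      (Submodule.smul_mem _ ((k : K) - j) l3))
    convert this using 1
    rw [eq_inv_smul_iff₀ (mul_ne_zero ht hm)]
    push_cast at j2 ⊢
    rw [hmk] at j2 ⊢
    linear_combination (norm := module) ((k : K) + j + 2) • j1 + ((k : K) - j) • j2

theorem hyp_succ {r : ℕ} (hr : 1 ≤ r) (H : S.Hyp r) : S.Hyp (r + 1) := by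
  have N := neg_succ hr H
  have B : ∀ k d m : ℕ, k + d = m + 1 →
      ⁅S.e k, S.U r d⁆ - ((k * r : K) - d) • S.U (r + 1) m ∈ S.P (r + 1) m := by
    intro k d m h
    rcases Nat.lt_or_ge r 2 with h2 | h2
    · obtain rfl : r = 1 := by omega
      exact brk_one k d m h
    · exact brk_two h2 H k d m h
  refine ⟨N, ?_, ?_, ?_⟩
  · intro s h1 h2 d
    rcases Nat.lt_or_ge r s with h | h
    · obtain rfl : s = r + 1 := by omega
      obtain ⟨n, rfl⟩ : ∃ n, r = n + 1 := ⟨r - 1, by omega⟩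
      apply S.Fi_le
      · intro r' r'' d' d'' h1 h2 h3 h4 a ha b hb
        exact Submodule.mem_sup_right (mul_mem_P h1 h2 ha hb h3 h4)
      · intro l hl y hy
        obtain ⟨t, ht⟩ : ∃ t : ℕ, l + t = d + 1 := ⟨d + 1 - l, by omega⟩
        rw [show (d : ℤ) - l + 1 = (t : ℤ) by omega] at hy
        have := H.gen (n + 1) hr le_rfl t hy
        obtain ⟨u, hu, p, hp, rfl⟩ := Submodule.mem_sup.1 this
        obtain ⟨c, rfl⟩ := Submodule.mem_span_singleton.1 hu
        rw [bl_add, bl_smul]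
        have b1 := B l t d ht
        have b2 := lie_mem_P H.N (s := 1) (q := n + 1 + 1) (d'' := d) le_rfl hr (by omega)
          (S.e_mem (k := l) le_rfl) hp (by omega) (by omega)
        have b3 := Submodule.add_mem _ (Submodule.smul_mem _ c b1) b2
        rw [Submodule.mem_sup]
        refine ⟨_, Submodule.mem_span_singleton.2
          ⟨c * ((l * (n + 1 : ℕ) : K) - t), rfl⟩, _, b3, ?_⟩
        module
    · exact H.gen s h1 h d
  · intro s h1 h2 k d m h
    rcases Nat.lt_or_ge s r with h' | h'
    · exact H.brk s h1 h' k d m h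
    · obtain rfl : s = r := by omega
      exact B k d m h
  · intro s h1 h2 l d
    rcases Nat.lt_or_ge r s with h | h
    · obtain rfl : s = r + 1 := by omega
      have hd : (d : K) + 1 ≠ 0 := by exact_mod_cast (by omega : d + 1 ≠ 0)
      have z := congrArg (S.δ l) (lie_U (S := S) hr d)
      rw [S.δ_lie, S.δ_e, map_neg, map_smul, zero_add] at z
      have d1 := H.der r hr le_rfl l (d + 1)
      have l1 := lie_congr H.N (q := r + 1) (d'' := ((d + l : ℕ) : ℤ)) le_rfl hr (by omega)
        (S.e_mem (k := 0) (d := 0) (by simp)) d1 (by omega) (by push_cast; omega)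
      have l2 := B l (d + 1) (d + l) (by omega)
      have l3 := lie_U (S := S) hr (d + l)
      rw [show d + 1 + l = d + l + 1 by omega, bl_smul, l3] at l1
      have := Submodule.smul_mem _ (-((d : K) + 1)⁻¹) (Submodule.add_mem _ l1 l2)
      convert this using 1
      rw [neg_smul, ← smul_neg, eq_inv_smul_iff₀ hd]
      push_cast
      linear_combination (norm := module) z
    · exact H.der s h1 h l d

theorem hyp_all : ∀ r : ℕ, 1 ≤ r → S.Hyp r
  | 1, _ => hyp_one
  | n + 2, _ => hyp_succ (by omega) (hyp_all (n + 1) (by omega))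

theorem main {r s : ℕ} {d d' : ℤ} (hr : 1 ≤ r) (hs : 1 ≤ s) {a b : A} (ha : a ∈ S.Fi r d)
    (hb : b ∈ S.Fi s d') : ⁅a, b⁆ ∈ S.Fi (r + s) (d + d' - 1) :=
  lie_mem (hyp_all (S := S) (r + s) (by omega)).N hr hs (by omega) ha hb

end SHSys

theorem FiltAux_congr : ∀ (r f g : ℕ) (d : ℤ), r ≤ f + 1 → r ≤ g + 1 →
    FiltAux f r d = FiltAux g r d := by
  intro r
  induction r using Nat.strong_induction_on with
  | _ r ih =>
  intro f g d hf hg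
  match r, f, g with
  | 0, _, _ => simp only [FiltAux]
  | 1, _, _ => simp only [FiltAux]
  | n + 2, 0, _ => omega
  | n + 2, _, 0 => omega
  | n + 2, f + 1, g + 1 =>
    simp only [FiltAux]
    have key : ∀ r, r < n + 2 → ∀ d, FiltAux f r d = FiltAux g r d := fun r hr d =>
      ih r hr f g d (by omega) (by omega)
    congr 2
    · ext x
      constructor
      · rintro ⟨r', r'', d', d'', h1, h2, h3, h4, a, ha, b, hb, rfl⟩
        exact ⟨r', r'', d', d'', h1, h2, h3, h4, a, key r' (by omega) d' ▸ ha, b,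
          key r'' (by omega) d'' ▸ hb, rfl⟩
      · rintro ⟨r', r'', d', d'', h1, h2, h3, h4, a, ha, b, hb, rfl⟩
        exact ⟨r', r'', d', d'', h1, h2, h3, h4, a, (key r' (by omega) d').symm ▸ ha, b,
          (key r'' (by omega) d'').symm ▸ hb, rfl⟩
    · ext x
      simp only [key (n + 1) (by omega)]

theorem Filt_two (n : ℕ) (d : ℤ) : Filt (n + 2) d = Submodule.span F
        ({x | ∃ r' r'' : ℕ, ∃ d' d'' : ℤ, 1 ≤ r' ∧ 1 ≤ r'' ∧ r' + r'' = n + 2 ∧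
            d' + d'' = d ∧ ∃ a ∈ Filt r' d', ∃ b ∈ Filt r'' d'', x = a * b} ∪
         {x | ∃ l : ℕ, (l : ℤ) ≤ d + 1 ∧ ∃ y ∈ Filt (n + 1) (d - l + 1),
            x = br (D1 l) y}) := by
  have key : ∀ r, r < n + 2 → ∀ d, FiltAux (n + 1) r d = Filt r d := fun r hr d =>
      FiltAux_congr r (n + 1) r d (by omega) (by omega)
  rw [Filt, FiltAux]
  congr 2
  · ext x
    constructor
    · rintro ⟨r', r'', d', d'', h1, h2, h3, h4, a, ha, b, hb, rfl⟩
      exact ⟨r', r'', d', d'', h1, h2, h3, h4, a, key r' (by omega) d' ▸ ha, b,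
        key r'' (by omega) d'' ▸ hb, rfl⟩
    · rintro ⟨r', r'', d', d'', h1, h2, h3, h4, a, ha, b, hb, rfl⟩
      exact ⟨r', r'', d', d'', h1, h2, h3, h4, a, (key r' (by omega) d').symm ▸ ha, b,
        (key r'' (by omega) d'').symm ▸ hb, rfl⟩

theorem SH_mix (l k : ℕ) : br (D0 (l + 1)) (D1 k) = D1 (k + l) := by
  have := RingQuot.mkAlgHom_rel F (SHRel.mix l k)
  rw [add_comm l k] at this
  simpa only [br, D0, D1, Nat.add_sub_cancel, map_sub, map_mul] using this

theorem SH_quad : 3 * br (D1 2) (D1 1) - br (D1 3) (D1 0) + br (D1 1) (D1 0)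
      + (κ * (κ - 1)) • (D1 0 * D1 0 + br (D1 1) (D1 0)) = 0 := by
  have := RingQuot.mkAlgHom_rel F SHRel.quad
  simpa only [br, D0, D1, Nat.add_sub_cancel, map_sub, map_mul, map_add, map_smul, map_zero, map_ofNat] using this

theorem SH_cubic : br (D1 0) (br (D1 0) (D1 1)) = 0 := by
  have := RingQuot.mkAlgHom_rel F SHRel.cubic
  simpa only [br, D0, D1, Nat.add_sub_cancel, map_sub, map_mul, map_zero] using this

/-- The abstract system attached to `SH⁺`. -/
def SHinst : SHSys F SHp where
  e := D1
  δ l := LinearMap.mulLeft F (D0 (l + 1)) - LinearMap.mulRight F (D0 (l + 1))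
  Fi := Filt
  c := κ * (κ - 1)
  δ_mul := by
    intro l a b
    exact SHSys.leib _ a b
  δ_e := by
    intro l k
    simpa only [LinearMap.sub_apply, LinearMap.mulRight_apply, LinearMap.mulLeft_apply, br]
      using SH_mix l k
  quad := SH_quad
  cubic := SH_cubic
  Fi_one := by intro d; rw [Filt, FiltAux]
  Fi_two := Filt_two

/-- For `a ∈ F(r₁,d₁)` and `b ∈ F(r₂,d₂)` (with `r₁, r₂ ≥ 1`), the commutator
`[a,b]` lies in `F(r₁+r₂, d₁+d₂-1)`. -/
theorem statement6 :
    ∀ (r₁ r₂ : ℕ) (d₁ d₂ : ℤ), 1 ≤ r₁ → 1 ≤ r₂ →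
      ∀ a ∈ Filt r₁ d₁, ∀ b ∈ Filt r₂ d₂, br a b ∈ Filt (r₁ + r₂) (d₁ + d₂ - 1) := by
  intro r₁ r₂ d₁ d₂ h1 h2 a ha b hb
  have : CharZero F := charZero_of_injective_algebraMap (algebraMap ℂ F).injective
  exact SHSys.main (S := SHinst) h1 h2 ha hb
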